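/- (Convergence of the discretised minimisation programs.) Under Assumption (A) and with the notation and hypotheses of the previous discretisation (measures μ_i, cones U_n, closure U_∞, values p_{2,n} for n ∈ ℕ ∪ {∞}, optimisers μ*_{2,n}, and C > 0 with C·μ_1 feasible): (b) there exist a strictly increasing sequence (n_k) of natural numbers and a measure ν_∞ ∈ U_∞ with r_{ν_∞}(t,b(t)) ≥ 1 for all t ∈ (0,t0], such that μ*_{2,n_k} → ν_∞ vaguely and p_{2,∞} ≤ ∫ g dν_∞ ≤ inf_{n∈ℕ} p_{2,n} = lim_{n→∞} p_{2,n}; (c) if in addition there is a sequence (ξ_n) with ξ_n ∈ U_n and sup_n ξ_n([2b(0),∞)) < ∞ converging vaguely to a measure μ*_∞ attaining p_{2,∞}, and lim_{n→∞} sup_{t ∈ (0,t0]} | r_{μ*_∞}(t,b(t)) − r_{ξ_n}(t,b(t)) | / r_{μ_1}(t,b(t)) = 0, then ν_∞ attains p_{2,∞} and p_{2,∞} = ∫ g dν_∞ = inf_{n∈ℕ} p_{2,n} = lim_{n→∞} p_{2,n}. -/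

import Mathlib

open MeasureTheory Set Filter
open scoped ENNReal NNReal Topology

noncomputable def rTheta (θ t x : ℝ) : ℝ := Real.exp (-θ ^ 2 / (2 * t) + θ * x / t)

noncomputable def rMu (μ : Measure ℝ) (t x : ℝ) : ℝ≥0∞ :=
  ∫⁻ θ, ENNReal.ofReal (rTheta θ t x) ∂μ

/-- The positive cone `U_n` generated by the measures `μ_1 = μs 0, …, μ_n = μs (n-1)`. -/
def coneU (μs : ℕ → Measure ℝ) (n : ℕ) : Set (Measure ℝ) :=
  {μ | ∃ a : ℕ → ℝ≥0, μ = ∑ i ∈ Finset.range n, a i • μs i}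

/-- The vague topology on measures on `ℝ`: the coarsest topology making
`μ ↦ ∫ f dμ` continuous for every continuous compactly supported `f`. -/
noncomputable def vagueTop : TopologicalSpace (Measure ℝ) :=
  ⨅ (f : ℝ → ℝ) (_ : Continuous f) (_ : HasCompactSupport f),
    TopologicalSpace.induced (fun μ : Measure ℝ => ∫ x, f x ∂μ) inferInstance

/-- `U_∞`: the vague closure of `⋃ n, U_n`. -/
noncomputable def coneUInf (μs : ℕ → Measure ℝ) : Set (Measure ℝ) :=
  @closure _ vagueTop (⋃ n, coneU μs n)

/-- Feasible measures of the minimisation program restricted to `U`. -/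
def feasSet (b : ℝ → ℝ) (t0 : ℝ) (U : Set (Measure ℝ)) : Set (Measure ℝ) :=
  {μ ∈ U | ∀ t ∈ Set.Ioc 0 t0, 1 ≤ rMu μ t (b t)}

/-- The objective `∫ g dμ` with `g θ = r_θ(t0, x0)`. -/
noncomputable def gInt (t0 x0 : ℝ) (μ : Measure ℝ) : ℝ≥0∞ :=
  ∫⁻ θ, ENNReal.ofReal (rTheta θ t0 x0) ∂μ

/-- The optimal value `p_{2,·}` of the minimisation program restricted to `U`. -/
noncomputable def pVal (b : ℝ → ℝ) (t0 x0 : ℝ) (U : Set (Measure ℝ)) : ℝ≥0∞ :=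
  ⨅ μ ∈ feasSet b t0 U, gInt t0 x0 μ

/-- Vague convergence of a sequence of measures on `ℝ`. -/
def VagueTendsto (μn : ℕ → Measure ℝ) (μ : Measure ℝ) : Prop :=
  ∀ f : ℝ → ℝ, Continuous f → HasCompactSupport f →
    Tendsto (fun n => ∫ x, f x ∂(μn n)) atTop (𝓝 (∫ x, f x ∂μ))


/-- Weak sequential compactness, in weighted form. -/
lemma weighted_compactness (w : ℝ → ℝ) (hw : Continuous w) (hwpos : ∀ θ, 0 < w θ)
    (μ : ℕ → Measure ℝ) (M : ℝ≥0) (a : ℝ≥0) (ha : 0 < a)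
    (hM : ∀ n, ∫⁻ θ, ENNReal.ofReal (w θ * Real.exp |θ|) ∂(μ n) ≤ M)
    (hA : ∀ n, (a : ℝ≥0∞) ≤ ∫⁻ θ, ENNReal.ofReal (w θ) ∂(μ n)) :
    ∃ (φ : ℕ → ℕ) (ν : Measure ℝ), StrictMono φ ∧
      ∀ f : ℝ → ℝ, Continuous f → (∃ B : ℝ, ∀ θ, |f θ| ≤ B * w θ) →
        Integrable f ν ∧ (∀ n, Integrable f (μ n)) ∧
        Tendsto (fun n => ∫ θ, f θ ∂(μ (φ n))) atTop (𝓝 (∫ θ, f θ ∂ν)) := by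
  set W : ℝ → ℝ≥0 := fun θ => (w θ).toNNReal with hW
  have hWm : Measurable W := hw.measurable.real_toNNReal
  have hWc : ∀ θ, (W θ : ℝ) = w θ := fun θ => Real.coe_toNNReal _ (hwpos θ).le
  set m : ℕ → Measure ℝ := fun n => (μ n).withDensity (fun θ => (W θ : ℝ≥0∞)) with hm
  have hmuniv : ∀ n, m n univ = ∫⁻ θ, ENNReal.ofReal (w θ) ∂(μ n) := by
    intro n; rw [hm]; simp [withDensity_apply, hW, ENNReal.ofReal]
  have hmexp : ∀ n, ∫⁻ θ, ENNReal.ofReal (Real.exp |θ|) ∂(m n) ≤ M := by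
    intro n
    refine le_trans (le_of_eq ?_) (hM n)
    rw [hm]
    simp only
    rw [lintegral_withDensity_eq_lintegral_mul _ hWm.coe_nnreal_ennreal (by fun_prop)]
    refine lintegral_congr fun θ => ?_
    simp only [Pi.mul_apply, hW]
    rw [ENNReal.ofReal_mul (hwpos θ).le]; rfl
  have hmle : ∀ n, m n univ ≤ M := by
    intro n
    refine le_trans ?_ (hmexp n)
    rw [← lintegral_one]
    refine lintegral_mono fun θ => ?_
    rw [← ENNReal.ofReal_one]
    exact ENNReal.ofReal_le_ofReal (Real.one_le_exp (abs_nonneg _))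
  have hmge : ∀ n, (a : ℝ≥0∞) ≤ m n univ := fun n => (hmuniv n) ▸ hA n
  have hmfin : ∀ n, IsFiniteMeasure (m n) := fun n => ⟨(hmle n).trans_lt ENNReal.coe_lt_top⟩
  have htail : ∀ n (R : ℕ), m n (Metric.closedBall 0 (R : ℝ))ᶜ ≤
      M * ENNReal.ofReal (Real.exp (-(R : ℝ))) := by
    intro n R
    have h1 := mul_meas_ge_le_lintegral₀ (μ := m n)
      (f := fun θ => ENNReal.ofReal (Real.exp |θ|)) (by fun_prop) (ENNReal.ofReal (Real.exp R))
    have h2 : m n (Metric.closedBall 0 (R : ℝ))ᶜ ≤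
        m n {x | ENNReal.ofReal (Real.exp R) ≤ ENNReal.ofReal (Real.exp |x|)} := by
      apply measure_mono
      intro x hx
      simp only [mem_compl_iff, Metric.mem_closedBall, dist_zero_right, not_le, Real.norm_eq_abs]
        at hx
      exact ENNReal.ofReal_le_ofReal (Real.exp_le_exp.2 hx.le)
    have h3 : ENNReal.ofReal (Real.exp R) * m n (Metric.closedBall 0 (R : ℝ))ᶜ ≤ M :=
      (mul_le_mul_right h2 _).trans (h1.trans (hmexp n))
    calc m n (Metric.closedBall 0 (R : ℝ))ᶜ
        = ENNReal.ofReal (Real.exp R) * m n (Metric.closedBall 0 (R : ℝ))ᶜ *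
            ENNReal.ofReal (Real.exp (-(R : ℝ))) := by
          rw [mul_right_comm, ← ENNReal.ofReal_mul (Real.exp_pos _).le, ← Real.exp_add]
          simp
      _ ≤ _ := by gcongr
  -- normalise
  have hne : ∀ n, NeZero (m n) := fun n => ⟨fun h => by
    have := hmge n
    rw [h] at this
    simp at this
    exact ha.ne' this⟩
  set P : ℕ → ProbabilityMeasure ℝ := fun n =>
    ⟨((m n) univ)⁻¹ • m n, inferInstance⟩ with hP
  have hcomp : IsCompact {p : ProbabilityMeasure ℝ |
      ∀ R : ℕ, p (Metric.closedBall 0 (R : ℝ))ᶜ ≤ a⁻¹ * (M * (Real.exp (-(R : ℝ))).toNNReal)} := by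
    apply isCompact_setOfPred_probabilityMeasure_mass_eq_compl_isCompact_le
    · have h0 : Tendsto (fun R : ℕ => Real.exp (-(R : ℝ))) atTop (𝓝 0) :=
        Real.tendsto_exp_neg_atTop_nhds_zero.comp tendsto_natCast_atTop_atTop
      have h1 := (continuous_real_toNNReal.tendsto 0).comp h0
      rw [Real.toNNReal_zero] at h1
      simpa using (h1.const_mul M).const_mul (a⁻¹)
    · intro n; exact isCompact_closedBall _ _
    · exact Or.inl inferInstance
  have hPmem : ∀ n, P n ∈ {p : ProbabilityMeasure ℝ |
      ∀ R : ℕ, p (Metric.closedBall 0 (R : ℝ))ᶜ ≤ a⁻¹ * (M * (Real.exp (-(R : ℝ))).toNNReal)} := by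
    intro n R
    rw [← ENNReal.coe_le_coe, ProbabilityMeasure.ennreal_coeFn_eq_coeFn_toMeasure]
    have : ((P n : ProbabilityMeasure ℝ) : Measure ℝ) = ((m n) univ)⁻¹ • m n := rfl
    rw [this, Measure.smul_apply, smul_eq_mul]
    push_cast
    rw [ENNReal.coe_inv ha.ne']
    exact mul_le_mul' (ENNReal.inv_le_inv.2 (hmge n)) (htail n R)
  obtain ⟨p, -, φ₁, hφ₁, hp⟩ := hcomp.tendsto_subseq hPmem
  have hcmem : ∀ n, (m (φ₁ n)).real univ ∈ Icc (0 : ℝ) M := fun n =>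
    ⟨measureReal_nonneg, ENNReal.toReal_le_of_le_ofReal M.2 (by simpa using hmle (φ₁ n))⟩
  obtain ⟨c, hc, φ₂, hφ₂, hcl⟩ := isCompact_Icc.tendsto_subseq hcmem
  set q : Measure ℝ := ENNReal.ofReal c • (p : Measure ℝ) with hq
  have hqfin : IsFiniteMeasure q := by
    rw [hq]; exact Measure.smul_finite _ ENNReal.ofReal_ne_top
  refine ⟨φ₁ ∘ φ₂, q.withDensity (fun θ => (((W θ)⁻¹ : ℝ≥0) : ℝ≥0∞)), hφ₁.comp hφ₂, ?_⟩
  rintro f hf ⟨B, hB⟩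
  have hWi : Measurable (fun θ => (W θ)⁻¹) := hWm.inv
  set F : BoundedContinuousFunction ℝ ℝ := BoundedContinuousFunction.ofNormedAddCommGroup
    (fun θ => f θ / w θ) (hf.div hw (fun θ => (hwpos θ).ne')) B (by
      intro θ
      rw [Real.norm_eq_abs, abs_div, abs_of_pos (hwpos θ), div_le_iff₀ (hwpos θ)]
      exact hB θ) with hF
  have hFv : ∀ θ, F θ = f θ / w θ := fun θ => rfl
  have hfq : (fun θ => (W θ)⁻¹ • f θ) = F := by
    funext θ
    rw [hFv, NNReal.smul_def, NNReal.coe_inv, hWc, smul_eq_mul, inv_mul_eq_div]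
  have hfm : (fun θ => W θ • F θ) = f := by
    funext θ
    rw [hFv, NNReal.smul_def, hWc, smul_eq_mul, mul_div_cancel₀ _ (hwpos θ).ne']
  have hint : ∀ n, ∫ θ, f θ ∂(μ n) = (m n).real univ * ∫ θ, F θ ∂(P n : Measure ℝ) := by
    intro n
    have e1 : ∫ θ, F θ ∂(m n) = ∫ θ, f θ ∂(μ n) := by
      rw [hm]
      simp only
      rw [integral_withDensity_eq_integral_smul hWm, hfm]
    have : ((P n : ProbabilityMeasure ℝ) : Measure ℝ) = ((m n) univ)⁻¹ • m n := rfl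
    rw [this, integral_smul_measure, ← e1, smul_eq_mul, ENNReal.toReal_inv, ← mul_assoc,
      Measure.real, mul_inv_cancel₀, one_mul]
    exact (ENNReal.toReal_pos ((ENNReal.coe_pos.2 ha).trans_le (hmge n)).ne'
      (measure_ne_top _ _)).ne'
  refine ⟨?_, ?_, ?_⟩
  · rw [integrable_withDensity_iff_integrable_smul hWi, hfq]
    exact F.integrable q
  · intro n
    rw [← hfm, ← integrable_withDensity_iff_integrable_smul hWm]
    exact F.integrable (m n)
  · rw [integral_withDensity_eq_integral_smul hWi, hfq, hq, integral_smul_measure,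
      ENNReal.toReal_ofReal hc.1, smul_eq_mul]
    simp only [hint]
    have h1 := (ProbabilityMeasure.tendsto_iff_forall_integral_tendsto.1 hp F).comp
      hφ₂.tendsto_atTop
    exact hcl.mul h1

lemma rTheta_pos (θ t x : ℝ) : 0 < rTheta θ t x := Real.exp_pos _

lemma rTheta_cont (t x : ℝ) : Continuous (fun θ => rTheta θ t x) := by
  unfold rTheta; fun_prop

lemma quad_bound (a d s : ℝ) (ha : 0 < a) : -a * s ^ 2 + d * s ≤ d ^ 2 / (4 * a) := by
  rw [le_div_iff₀ (by positivity)]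
  nlinarith [sq_nonneg (2 * a * s - d)]

lemma rTheta_le (t x : ℝ) (ht : 0 < t) (K : ℝ) :
    ∃ B : ℝ, 0 < B ∧ ∀ θ, rTheta θ t x ≤ B * Real.exp (-K * |θ|) := by
  refine ⟨Real.exp ((|x| / t + K) ^ 2 / (4 * (1 / (2 * t)))), Real.exp_pos _, fun θ => ?_⟩
  rw [← Real.exp_add]
  apply Real.exp_le_exp.2
  have h := quad_bound (1 / (2 * t)) (|x| / t + K) |θ| (by positivity)
  have h2 : θ * x / t ≤ |x| / t * |θ| := by
    rw [div_mul_eq_mul_div, mul_comm |x|, ← abs_mul]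
    gcongr; exact le_abs_self _
  have h3 : -(1 / (2 * t)) * |θ| ^ 2 = -θ ^ 2 / (2 * t) := by
    rw [sq_abs]; ring
  rw [h3] at h
  linarith

lemma rTheta_ratio (t t0 x0 y : ℝ) (ht : 0 < t) (htt : t < t0) :
    ∃ B : ℝ, 0 < B ∧ ∀ θ, rTheta θ t y ≤ B * (rTheta θ t0 x0 * Real.exp (-|θ|)) := by
  have ht0 : 0 < t0 := ht.trans htt
  set a : ℝ := (1 / t - 1 / t0) / 2 with haa
  have ha : 0 < a := by
    have := one_div_lt_one_div_of_lt ht htt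
    rw [haa]; linarith
  set d : ℝ := |y / t - x0 / t0| + 1 with hd
  refine ⟨Real.exp (d ^ 2 / (4 * a)), Real.exp_pos _, fun θ => ?_⟩
  unfold rTheta
  rw [← Real.exp_add, ← Real.exp_add]
  apply Real.exp_le_exp.2
  have h := quad_bound a d |θ| ha
  have h2 : θ * (y / t - x0 / t0) ≤ |y / t - x0 / t0| * |θ| := by
    rw [mul_comm, ← abs_mul]; exact le_abs_self _
  have h3 : -a * |θ| ^ 2 = -θ ^ 2 / (2 * t) + θ ^ 2 / (2 * t0) := by
    rw [sq_abs, haa]; ring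
  have h4 : θ * (y / t - x0 / t0) = θ * y / t - θ * x0 / t0 := by ring
  have h5 : -θ ^ 2 / (2 * t0) = - (θ ^ 2 / (2 * t0)) := by ring
  rw [h3] at h
  rw [hd] at h ⊢
  linarith

lemma rMu_lt_top (μ : Measure ℝ) [IsFiniteMeasure μ] (t x : ℝ) (ht : 0 < t) :
    rMu μ t x < ⊤ := by
  obtain ⟨B, hB, h⟩ := rTheta_le t x ht 0
  calc rMu μ t x ≤ ∫⁻ θ, ENNReal.ofReal B ∂μ := by
        unfold rMu
        refine lintegral_mono fun θ => ENNReal.ofReal_le_ofReal ?_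
        simpa using h θ
    _ < ⊤ := by
        rw [lintegral_const]
        exact ENNReal.mul_lt_top ENNReal.ofReal_lt_top (measure_lt_top _ _)

/-- Passing to the endpoint `t0`. -/
lemma endpoint (b : ℝ → ℝ) (t0 : ℝ) (ht0 : 0 < t0) (hb : DifferentiableAt ℝ b t0)
    (ν : Measure ℝ) (h : ∀ t, 0 < t → t < t0 → 1 ≤ rMu ν t (b t)) : 1 ≤ rMu ν t0 (b t0) := by
  have hd : DifferentiableAt ℝ (fun t => b t / t) t0 := hb.div differentiableAt_id ht0.ne'
  obtain ⟨K, hKpos, hK⟩ := hd.isBigO_sub.exists_pos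
  rw [Asymptotics.isBigOWith_iff] at hK
  set L := K * t0 ^ 2 with hL
  have hev : ∀ᶠ t in 𝓝[<] t0,
      1 ≤ ENNReal.ofReal (Real.exp ((1 / t - 1 / t0) * L ^ 2 / 2)) * rMu ν t0 (b t0) := by
    filter_upwards [self_mem_nhdsWithin, nhdsWithin_le_nhds hK,
      nhdsWithin_le_nhds (lt_mem_nhds ht0)] with t htlt hKt htpos
    simp only [mem_Iio] at htlt
    refine (h t htpos htlt).trans ?_
    unfold rMu
    rw [← lintegral_const_mul _ ((rTheta_cont _ _).measurable.ennreal_ofReal)]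
    refine lintegral_mono fun θ => ?_
    simp only
    rw [← ENNReal.ofReal_mul (Real.exp_pos _).le]
    apply ENNReal.ofReal_le_ofReal
    unfold rTheta
    rw [← Real.exp_add]
    apply Real.exp_le_exp.2
    have hs : 0 < 1 / t - 1 / t0 := by
      have := one_div_lt_one_div_of_lt htpos htlt
      linarith
    have hb1 : |b t / t - b t0 / t0| ≤ L * (1 / t - 1 / t0) := by
      simp only [Real.norm_eq_abs] at hKt
      refine hKt.trans ?_
      rw [abs_sub_comm, abs_of_pos (by linarith)]
      have : L * (1 / t - 1 / t0) = K * (t0 - t) * (t0 / t) := by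
        rw [hL]; field_simp
      rw [this]
      have h1 : 1 ≤ t0 / t := by rw [one_le_div htpos]; exact htlt.le
      have h2 : 0 ≤ K * (t0 - t) := by
        apply mul_nonneg hKpos.le; linarith
      nlinarith
    have h2 : θ * (b t / t - b t0 / t0) ≤ |θ| * (L * (1 / t - 1 / t0)) := by
      refine (le_abs_self _).trans ?_
      rw [abs_mul]; gcongr
    have h4 : θ * (b t / t - b t0 / t0) = θ * b t / t - θ * b t0 / t0 := by ring
    have h5 : -θ ^ 2 / (2 * t) - -θ ^ 2 / (2 * t0) = - (1 / t - 1 / t0) * |θ| ^ 2 / 2 := by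
      rw [sq_abs]; ring
    nlinarith [mul_nonneg hs.le (sq_nonneg (|θ| - L))]
  have hlim : Tendsto (fun t : ℝ =>
      ENNReal.ofReal (Real.exp ((1 / t - 1 / t0) * L ^ 2 / 2)) * rMu ν t0 (b t0)) (𝓝[<] t0)
      (𝓝 (1 * rMu ν t0 (b t0))) := by
    refine ENNReal.Tendsto.mul_const ?_ (Or.inl one_ne_zero)
    refine Tendsto.mono_left ?_ nhdsWithin_le_nhds
    have : ContinuousAt (fun t : ℝ =>
      ENNReal.ofReal (Real.exp ((1 / t - 1 / t0) * L ^ 2 / 2))) t0 := by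
      apply ENNReal.continuous_ofReal.continuousAt.comp
      apply Real.continuous_exp.continuousAt.comp
      have : ContinuousAt (fun t : ℝ => 1 / t) t0 :=
        continuousAt_const.div continuousAt_id ht0.ne'
      exact ((this.sub continuousAt_const).mul continuousAt_const).div_const _
    have h2 := this.tendsto
    simpa using h2
  rw [one_mul] at hlim
  exact ge_of_tendsto hlim hev

lemma coneU_finite (μs : ℕ → Measure ℝ) (hfin : ∀ i, IsFiniteMeasure (μs i)) (n : ℕ)
    (μ : Measure ℝ) (h : μ ∈ coneU μs n) : IsFiniteMeasure μ := by
  obtain ⟨a, rfl⟩ := h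
  refine ⟨?_⟩
  rw [Measure.finsetSum_apply]
  refine ENNReal.sum_lt_top.2 fun i _ => ?_
  exact measure_lt_top (a i • μs i) univ

lemma coneU_supp (μs : ℕ → Measure ℝ) (s : Set ℝ) (hs : ∀ i, μs i s = 0) (n : ℕ)
    (μ : Measure ℝ) (h : μ ∈ coneU μs n) : μ s = 0 := by
  obtain ⟨a, rfl⟩ := h
  rw [Measure.finsetSum_apply]
  refine Finset.sum_eq_zero fun i _ => ?_
  simp [hs i]

lemma coneU_mono (μs : ℕ → Measure ℝ) {n k : ℕ} (hnk : n ≤ k) : coneU μs n ⊆ coneU μs k := by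
  rintro μ ⟨a, rfl⟩
  refine ⟨fun i => if i < n then a i else 0, ?_⟩
  have : Finset.range n ⊆ Finset.range k := Finset.range_mono hnk
  rw [← Finset.sum_subset this]
  · refine Finset.sum_congr rfl fun i hi => ?_
    simp [Finset.mem_range.1 hi]
  · intro i _ hi
    simp only [Finset.mem_range] at hi
    simp [hi]

lemma coneU_smul_mem (μs : ℕ → Measure ℝ) (n : ℕ) (hn : 1 ≤ n) (c : ℝ≥0) :
    c • μs 0 ∈ coneU μs n := by
  apply coneU_mono μs hn
  exact ⟨fun _ => c, by simp⟩

lemma coneU_add_mem (μs : ℕ → Measure ℝ) (n : ℕ) (μ ν : Measure ℝ) (hμ : μ ∈ coneU μs n)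
    (hν : ν ∈ coneU μs n) : μ + ν ∈ coneU μs n := by
  obtain ⟨a, rfl⟩ := hμ
  obtain ⟨c, rfl⟩ := hν
  refine ⟨fun i => a i + c i, ?_⟩
  rw [← Finset.sum_add_distrib]
  exact Finset.sum_congr rfl fun i _ => (add_smul _ _ _).symm

lemma rMu_add (μ ν : Measure ℝ) (t x : ℝ) : rMu (μ + ν) t x = rMu μ t x + rMu ν t x := by
  unfold rMu; exact lintegral_add_measure _ _ _

lemma rMu_smul (c : ℝ≥0) (μ : Measure ℝ) (t x : ℝ) : rMu (c • μ) t x = c * rMu μ t x := by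
  unfold rMu; rw [lintegral_smul_measure]; rfl

lemma gInt_eq (t0 x0 : ℝ) (μ : Measure ℝ) : gInt t0 x0 μ = rMu μ t0 x0 := rfl

lemma pVal_anti (b : ℝ → ℝ) (t0 x0 : ℝ) {U V : Set (Measure ℝ)} (h : U ⊆ V) :
    pVal b t0 x0 V ≤ pVal b t0 x0 U := by
  unfold pVal
  exact biInf_mono fun μ hμ => ⟨h hμ.1, hμ.2⟩

lemma pVal_le (b : ℝ → ℝ) (t0 x0 : ℝ) {U : Set (Measure ℝ)} {μ : Measure ℝ}
    (h : μ ∈ feasSet b t0 U) : pVal b t0 x0 U ≤ gInt t0 x0 μ := iInf₂_le μ h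

lemma mem_coneUInf (μs : ℕ → Measure ℝ) (ρ : ℕ → Measure ℝ) (ν : Measure ℝ)
    (h : ∀ k, ∃ n, ρ k ∈ coneU μs n) (hv : VagueTendsto ρ ν) : ν ∈ coneUInf μs := by
  unfold coneUInf
  let _ := vagueTop
  have ht : Tendsto ρ atTop (𝓝 ν) := by
    have : (𝓝 ν) = ⨅ (f : ℝ → ℝ) (_ : Continuous f) (_ : HasCompactSupport f),
        comap (fun μ : Measure ℝ => ∫ x, f x ∂μ) (𝓝 (∫ x, f x ∂ν)) := by
      change @nhds _ vagueTop ν = _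
      unfold vagueTop
      simp only [nhds_iInf, nhds_induced]
    rw [this]
    simp only [tendsto_iInf, tendsto_comap_iff]
    intro f hf hfc
    exact hv f hf hfc
  refine mem_closure_of_tendsto ht (Eventually.of_forall fun k => ?_)
  exact mem_iUnion.2 (h k)

/-- The key estimate for part (c). -/
lemma part_c (b : ℝ → ℝ) (t0 x0 : ℝ) (ht0 : 0 < t0)
    (μs : ℕ → Measure ℝ) (hfin : ∀ i, IsFiniteMeasure (μs i))
    (s : Set ℝ) (hsupp : ∀ i, μs i sᶜ = 0)
    (hpos : ∀ t ∈ Set.Ioc 0 t0, rMu (μs 0) t (b t) ≠ 0)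
    (ξ : ℕ → Measure ℝ) (μI : Measure ℝ)
    (hξ : ∀ n : ℕ, 1 ≤ n → ξ n ∈ coneU μs n)
    (hmass : (⨆ n : ℕ, ξ n s) < ⊤)
    (hv : VagueTendsto ξ μI)
    (hfeas : ∀ t ∈ Set.Ioc 0 t0, 1 ≤ rMu μI t (b t))
    (hlim : Tendsto (fun n : ℕ => ⨆ t ∈ Set.Ioc 0 t0,
            ((rMu μI t (b t) - rMu (ξ n) t (b t))
              + (rMu (ξ n) t (b t) - rMu μI t (b t))) / rMu (μs 0) t (b t))
          atTop (𝓝 0)) :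
    (⨅ n : ℕ, pVal b t0 x0 (coneU μs (n + 1))) ≤ gInt t0 x0 μI := by
  set E : ℕ → ℝ≥0∞ := fun n : ℕ => ⨆ t ∈ Set.Ioc 0 t0,
            ((rMu μI t (b t) - rMu (ξ n) t (b t))
              + (rMu (ξ n) t (b t) - rMu μI t (b t))) / rMu (μs 0) t (b t) with hE
  set I := (⨅ n : ℕ, pVal b t0 x0 (coneU μs (n + 1))) with hI
  have hGfin : gInt t0 x0 (μs 0) ≠ ⊤ := (rMu_lt_top (μs 0) t0 x0 ht0).ne
  have step1 : ∀ n, 1 ≤ n → E n ≠ ⊤ → I ≤ gInt t0 x0 (ξ n) + E n * gInt t0 x0 (μs 0) := by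
    intro n hn hEn
    have hmem : ξ n + (E n).toNNReal • μs 0 ∈ feasSet b t0 (coneU μs n) := by
      refine ⟨coneU_add_mem _ _ _ _ (hξ n hn) (coneU_smul_mem _ _ hn _), fun t ht => ?_⟩
      rw [rMu_add, rMu_smul, ENNReal.coe_toNNReal hEn]
      have h1 : (rMu μI t (b t) - rMu (ξ n) t (b t)) / rMu (μs 0) t (b t) ≤ E n := by
        refine le_trans ?_ (le_iSup₂ (f := fun t (_ : t ∈ Set.Ioc 0 t0) =>
          ((rMu μI t (b t) - rMu (ξ n) t (b t))
              + (rMu (ξ n) t (b t) - rMu μI t (b t))) / rMu (μs 0) t (b t)) t ht)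
        exact ENNReal.div_le_div_right le_self_add _
      have h2 : rMu μI t (b t) - rMu (ξ n) t (b t) ≤ E n * rMu (μs 0) t (b t) :=
        (ENNReal.div_le_iff (hpos t ht) (rMu_lt_top (μs 0) t (b t) ht.1).ne).1 h1
      exact (hfeas t ht).trans (tsub_le_iff_left.1 h2)
    have h3 := pVal_le b t0 x0 hmem
    rw [gInt_eq, rMu_add, rMu_smul, ENNReal.coe_toNNReal hEn] at h3
    refine le_trans ?_ h3
    have h4 := iInf_le (fun n : ℕ => pVal b t0 x0 (coneU μs (n + 1))) (n - 1)
    rwa [Nat.sub_add_cancel hn] at h4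
  set K := (⨆ n : ℕ, ξ n s) with hK
  have hKb : ∀ n, 1 ≤ n → ξ n univ ≤ K := by
    intro n hn
    have h0 := coneU_supp μs sᶜ hsupp n _ (hξ n hn)
    calc ξ n univ ≤ ξ n s + ξ n sᶜ := by
          rw [← union_compl_self s]; exact measure_union_le _ _
      _ = ξ n s := by rw [h0, add_zero]
      _ ≤ K := le_iSup (fun n => ξ n s) n
  have step2 : ∀ δ : ℝ≥0, 0 < δ → I ≤ gInt t0 x0 μI + δ * K := by
    intro δ hδ
    set f : ℝ → ℝ := fun θ => max (rTheta θ t0 x0 - δ) 0 with hf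
    have hfc : Continuous f := ((rTheta_cont t0 x0).sub continuous_const).max continuous_const
    have hfle : ∀ θ, f θ ≤ rTheta θ t0 x0 := fun θ =>
      max_le (by have := δ.2; linarith [NNReal.coe_nonneg δ]) (rTheta_pos _ _ _).le
    have hf0 : ∀ θ, 0 ≤ f θ := fun θ => le_max_right _ _
    have hfs : HasCompactSupport f := by
      obtain ⟨B, hB, hBb⟩ := rTheta_le t0 x0 ht0 1
      refine HasCompactSupport.intro (isCompact_closedBall (0 : ℝ) (B / δ)) fun θ hθ => ?_
      simp only [Metric.mem_closedBall, dist_zero_right, not_le, Real.norm_eq_abs] at hθ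
      apply max_eq_right
      have hδ' : (0 : ℝ) < δ := hδ
      have h1 := hBb θ
      rw [div_lt_iff₀ hδ'] at hθ
      have h2 : Real.exp (-1 * |θ|) * (|θ| + 1) ≤ 1 := by
        calc Real.exp (-1 * |θ|) * (|θ| + 1) ≤ Real.exp (-1 * |θ|) * Real.exp |θ| := by
              gcongr; exact Real.add_one_le_exp _
          _ = 1 := by rw [← Real.exp_add]; simp
      have h3 : B * Real.exp (-1 * |θ|) ≤ δ := by
        have he := Real.exp_pos (-1 * |θ|)
        calc B * Real.exp (-1 * |θ|) ≤ (|θ| * δ) * Real.exp (-1 * |θ|) := by gcongr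
          _ = δ * (Real.exp (-1 * |θ|) * |θ|) := by ring
          _ ≤ δ * 1 := by gcongr; nlinarith
          _ = δ := mul_one _
      linarith
    have hfl : ENNReal.ofReal (∫ θ, f θ ∂μI) ≤ gInt t0 x0 μI := by
      rw [integral_eq_lintegral_of_nonneg_ae (Eventually.of_forall hf0)
        hfc.aestronglyMeasurable]
      refine ENNReal.ofReal_toReal_le.trans ?_
      exact lintegral_mono fun θ => ENNReal.ofReal_le_ofReal (hfle θ)
    have hn : ∀ n, 1 ≤ n → gInt t0 x0 (ξ n) ≤ ENNReal.ofReal (∫ θ, f θ ∂(ξ n)) + δ * K := by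
      intro n hn
      have := coneU_finite μs hfin n _ (hξ n hn)
      rw [ofReal_integral_eq_lintegral_ofReal (hfc.integrable_of_hasCompactSupport hfs)
        (Eventually.of_forall hf0)]
      calc gInt t0 x0 (ξ n) ≤ ∫⁻ θ, (ENNReal.ofReal (f θ) + δ) ∂(ξ n) := by
            refine lintegral_mono fun θ => ?_
            simp only
            rw [← ENNReal.ofReal_coe_nnreal, ← ENNReal.ofReal_add (hf0 θ) (NNReal.coe_nonneg δ)]
            apply ENNReal.ofReal_le_ofReal
            have := le_max_left (rTheta θ t0 x0 - δ) 0
            simp only [hf]; linarith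
        _ = ∫⁻ θ, ENNReal.ofReal (f θ) ∂(ξ n) + δ * ξ n univ := by
            rw [lintegral_add_right _ measurable_const, lintegral_const]
        _ ≤ _ := by gcongr; exact hKb n hn
    have hev : ∀ᶠ n in atTop, I ≤ ENNReal.ofReal (∫ θ, f θ ∂(ξ n)) + δ * K
        + E n * gInt t0 x0 (μs 0) := by
      filter_upwards [eventually_ge_atTop 1, hlim.eventually_lt_const ENNReal.zero_lt_top]
        with n h1 h2
      exact (step1 n h1 h2.ne).trans (by gcongr; exact hn n h1)
    have htend : Tendsto (fun n => ENNReal.ofReal (∫ θ, f θ ∂(ξ n)) + δ * K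
        + E n * gInt t0 x0 (μs 0)) atTop
        (𝓝 (ENNReal.ofReal (∫ θ, f θ ∂μI) + δ * K + 0 * gInt t0 x0 (μs 0))) :=
      ((ENNReal.tendsto_ofReal (hv f hfc hfs)).add tendsto_const_nhds).add
        (ENNReal.Tendsto.mul_const hlim (Or.inr hGfin))
    have := ge_of_tendsto htend hev
    rw [zero_mul, add_zero] at this
    exact this.trans (by gcongr)
  have htend : Tendsto (fun δ : ℝ≥0 => gInt t0 x0 μI + (δ : ℝ≥0∞) * K) (𝓝[>] 0)
      (𝓝 (gInt t0 x0 μI + ((0 : ℝ≥0) : ℝ≥0∞) * K)) := by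
    refine tendsto_const_nhds.add (ENNReal.Tendsto.mul_const ?_ (Or.inr hmass.ne))
    exact (ENNReal.continuous_coe.tendsto 0).mono_left nhdsWithin_le_nhds
  have hfinal := ge_of_tendsto htend (by
    filter_upwards [self_mem_nhdsWithin] with δ hδ using step2 δ hδ)
  simpa using hfinal

theorem stmt_17 (b : ℝ → ℝ)
    (hba : AnalyticOnNhd ℝ b (Set.Ici 0)) (hbconc : ConcaveOn ℝ (Set.Ici 0) b)
    (hb0 : 0 < b 0) (hbderiv : ∃ d : ℝ, HasDerivWithinAt b d (Set.Ici 0) 0)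
    (t0 x0 : ℝ) (ht0 : 0 < t0) (hx0 : x0 < b t0)
    (μs : ℕ → Measure ℝ) (hfin : ∀ i, IsFiniteMeasure (μs i))
    (hsupp : ∀ i, μs i (Set.Ici (2 * b 0))ᶜ = 0)
    (C : ℝ≥0) (hC : 0 < C)
    (hCfeas : ∀ t ∈ Set.Ioc 0 t0, 1 ≤ rMu (C • μs 0) t (b t))
    -- a sequence of optimisers `μ*_{2,n}` of the discretised programs
    (μstar : ℕ → Measure ℝ)
    (hμstar : ∀ n : ℕ, 1 ≤ n → μstar n ∈ feasSet b t0 (coneU μs n) ∧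
      gInt t0 x0 (μstar n) = pVal b t0 x0 (coneU μs n)) :
    ∃ (nk : ℕ → ℕ) (νInf : Measure ℝ), StrictMono nk ∧ (∀ k, 1 ≤ nk k) ∧
      -- (b)
      νInf ∈ coneUInf μs ∧ (∀ t ∈ Set.Ioc 0 t0, 1 ≤ rMu νInf t (b t)) ∧
      VagueTendsto (fun k => μstar (nk k)) νInf ∧
      pVal b t0 x0 (coneUInf μs) ≤ gInt t0 x0 νInf ∧
      gInt t0 x0 νInf ≤ (⨅ n : ℕ, pVal b t0 x0 (coneU μs (n + 1))) ∧
      Tendsto (fun n : ℕ => pVal b t0 x0 (coneU μs (n + 1))) atTop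
        (𝓝 (⨅ n : ℕ, pVal b t0 x0 (coneU μs (n + 1)))) ∧
      -- (c)
      (∀ (ξ : ℕ → Measure ℝ) (μInfStar : Measure ℝ),
        (∀ n : ℕ, 1 ≤ n → ξ n ∈ coneU μs n) →
        (⨆ n : ℕ, ξ n (Set.Ici (2 * b 0))) < ⊤ →
        VagueTendsto ξ μInfStar →
        μInfStar ∈ feasSet b t0 (coneUInf μs) →
        gInt t0 x0 μInfStar = pVal b t0 x0 (coneUInf μs) →
        Tendsto (fun n : ℕ => ⨆ t ∈ Set.Ioc 0 t0,
            ((rMu μInfStar t (b t) - rMu (ξ n) t (b t))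
              + (rMu (ξ n) t (b t) - rMu μInfStar t (b t))) / rMu (μs 0) t (b t))
          atTop (𝓝 0) →
        (gInt t0 x0 νInf = pVal b t0 x0 (coneUInf μs) ∧
          pVal b t0 x0 (coneUInf μs) = ⨅ n : ℕ, pVal b t0 x0 (coneU μs (n + 1)))) := by

  have hμs0 := hfin 0
  have hpos : ∀ t ∈ Set.Ioc 0 t0, rMu (μs 0) t (b t) ≠ 0 := by
    intro t ht h0
    have := hCfeas t ht
    rw [rMu_smul, h0, mul_zero] at this
    simp at this
  set q : ℕ → Measure ℝ := fun n => μstar (n + 1) with hqdef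
  have hq := fun n => hμstar (n + 1) (Nat.le_add_left 1 n)
  have hanti : Antitone (fun n : ℕ => pVal b t0 x0 (coneU μs (n + 1))) := fun n k hnk =>
    pVal_anti b t0 x0 (coneU_mono μs (by omega))
  have hlimp : Tendsto (fun n : ℕ => pVal b t0 x0 (coneU μs (n + 1))) atTop
        (𝓝 (⨅ n : ℕ, pVal b t0 x0 (coneU μs (n + 1)))) := tendsto_atTop_iInf hanti
  -- the weight
  set w : ℝ → ℝ := fun θ => rTheta θ t0 x0 * Real.exp (-|θ|) with hw
  have hwc : Continuous w := (rTheta_cont t0 x0).mul (by fun_prop)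
  have hwpos : ∀ θ, 0 < w θ := fun θ => mul_pos (rTheta_pos _ _ _) (Real.exp_pos _)
  have hwe : ∀ θ, w θ * Real.exp |θ| = rTheta θ t0 x0 := by
    intro θ
    simp only [hw]
    rw [mul_assoc, ← Real.exp_add]; simp
  have hGC : gInt t0 x0 (C • μs 0) < ⊤ := rMu_lt_top (C • μs 0) t0 x0 ht0
  have hM : ∀ n, ∫⁻ θ, ENNReal.ofReal (w θ * Real.exp |θ|) ∂(q n) ≤
      ((gInt t0 x0 (C • μs 0)).toNNReal : ℝ≥0∞) := by
    intro n
    simp only [hwe]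
    rw [ENNReal.coe_toNNReal hGC.ne]
    change gInt t0 x0 (μstar (n + 1)) ≤ _
    rw [(hq n).2]
    exact pVal_le b t0 x0 ⟨coneU_smul_mem μs _ (Nat.le_add_left 1 n) C, hCfeas⟩
  obtain ⟨B1, hB1, hB1b⟩ := rTheta_ratio (t0 / 2) t0 x0 (b (t0 / 2)) (by linarith) (by linarith)
  have hA : ∀ n, ((B1.toNNReal⁻¹ : ℝ≥0) : ℝ≥0∞) ≤ ∫⁻ θ, ENNReal.ofReal (w θ) ∂(q n) := by
    intro n
    have h1 := (hq n).1.2 (t0 / 2) ⟨by linarith, by linarith⟩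
    have h2 : rMu (q n) (t0 / 2) (b (t0 / 2)) ≤
        ENNReal.ofReal B1 * ∫⁻ θ, ENNReal.ofReal (w θ) ∂(q n) := by
      unfold rMu
      rw [← lintegral_const_mul _ hwc.measurable.ennreal_ofReal]
      refine lintegral_mono fun θ => ?_
      simp only
      rw [← ENNReal.ofReal_mul hB1.le]
      exact ENNReal.ofReal_le_ofReal (hB1b θ)
    rw [ENNReal.coe_inv (Real.toNNReal_pos.2 hB1).ne']
    rw [ENNReal.inv_le_iff_le_mul (fun _ => by simpa using hB1) (fun h => absurd h (by simp))]
    exact h1.trans h2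
  obtain ⟨φ, ν, hφ, hconv⟩ := weighted_compactness w hwc hwpos q _ _
    (inv_pos.2 (Real.toNNReal_pos.2 hB1)) hM hA
  -- lintegral form of the convergence
  have hconvL : ∀ f : ℝ → ℝ, Continuous f → (∀ θ, 0 ≤ f θ) → (∃ B : ℝ, ∀ θ, f θ ≤ B * w θ) →
      Tendsto (fun n => ∫⁻ θ, ENNReal.ofReal (f θ) ∂(q (φ n))) atTop
        (𝓝 (∫⁻ θ, ENNReal.ofReal (f θ) ∂ν)) := by
    rintro f hf hf0 ⟨B, hB⟩
    obtain ⟨h1, h2, h3⟩ := hconv f hf ⟨B, fun θ => by rw [abs_of_nonneg (hf0 θ)]; exact hB θ⟩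
    rw [← ofReal_integral_eq_lintegral_ofReal h1 (Eventually.of_forall hf0)]
    simp only [← ofReal_integral_eq_lintegral_ofReal (h2 _) (Eventually.of_forall hf0)]
    exact ENNReal.tendsto_ofReal h3
  have hvague : VagueTendsto (fun k => μstar (φ k + 1)) ν := by
    intro f hf hfs
    have hdc : Continuous (fun θ => f θ / w θ) := hf.div hwc fun θ => (hwpos θ).ne'
    have hds : HasCompactSupport (fun θ => f θ / w θ) := by
      simp only [div_eq_mul_inv]
      exact hfs.mul_right
    obtain ⟨B, hB⟩ := hds.exists_bound_of_continuous hdc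
    refine (hconv f hf ⟨B, fun θ => ?_⟩).2.2
    have := hB θ
    rwa [Real.norm_eq_abs, abs_div, abs_of_pos (hwpos θ), div_le_iff₀ (hwpos θ)] at this
  have hνmem : ν ∈ coneUInf μs :=
    mem_coneUInf μs _ ν (fun k => ⟨φ k + 1, (hq (φ k)).1.1⟩) hvague
  have hνlt : ∀ t, 0 < t → t < t0 → 1 ≤ rMu ν t (b t) := by
    intro t ht htt
    obtain ⟨B, hB, hBb⟩ := rTheta_ratio t t0 x0 (b t) ht htt
    have h := hconvL (fun θ => rTheta θ t (b t)) (rTheta_cont _ _)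
      (fun θ => (rTheta_pos _ _ _).le) ⟨B, hBb⟩
    exact ge_of_tendsto h (Eventually.of_forall fun n => (hq (φ n)).1.2 t ⟨ht, htt.le⟩)
  have hνfeas : ∀ t ∈ Set.Ioc 0 t0, 1 ≤ rMu ν t (b t) := by
    rintro t ⟨ht, htt⟩
    rcases htt.lt_or_eq with h | rfl
    · exact hνlt t ht h
    · exact endpoint b t ht (hba t ht.le).differentiableAt ν hνlt
  have hνg : gInt t0 x0 ν ≤ ⨅ n : ℕ, pVal b t0 x0 (coneU μs (n + 1)) := by
    set f : ℕ → ℝ → ℝ := fun R θ => min (rTheta θ t0 x0) (R * w θ) with hf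
    have hfR : ∀ R : ℕ, ∫⁻ θ, ENNReal.ofReal (f R θ) ∂ν ≤
        ⨅ n : ℕ, pVal b t0 x0 (coneU μs (n + 1)) := by
      intro R
      have h := hconvL (f R) ((rTheta_cont _ _).min (continuous_const.mul hwc))
        (fun θ => le_min (rTheta_pos _ _ _).le (mul_nonneg (Nat.cast_nonneg _) (hwpos θ).le))
        ⟨R, fun θ => min_le_right _ _⟩
      refine le_of_tendsto_of_tendsto' h (hlimp.comp hφ.tendsto_atTop) fun n => ?_
      simp only [Function.comp]
      rw [← (hq (φ n)).2]
      exact lintegral_mono fun θ => ENNReal.ofReal_le_ofReal (min_le_left _ _)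
    have hmono : Tendsto (fun R : ℕ => ∫⁻ θ, ENNReal.ofReal (f R θ) ∂ν) atTop
        (𝓝 (∫⁻ θ, ENNReal.ofReal (rTheta θ t0 x0) ∂ν)) := by
      apply lintegral_tendsto_of_tendsto_of_monotone
      · intro R
        exact ((rTheta_cont _ _).min
          (continuous_const.mul hwc)).measurable.ennreal_ofReal.aemeasurable
      · refine Eventually.of_forall fun θ R S hRS => ?_
        apply ENNReal.ofReal_le_ofReal
        have : (R : ℝ) ≤ S := by exact_mod_cast hRS
        exact min_le_min_left _ (mul_le_mul_of_nonneg_right this (hwpos θ).le)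
      · refine Eventually.of_forall fun θ => ?_
        apply tendsto_const_nhds.congr'
        filter_upwards [eventually_ge_atTop ⌈Real.exp |θ|⌉₊] with R hR
        congr 1
        refine (min_eq_left ?_).symm
        rw [← hwe θ, mul_comm]
        exact mul_le_mul_of_nonneg_right (Nat.ceil_le.1 hR) (hwpos θ).le
    exact le_of_tendsto' hmono hfR
  have hpν : pVal b t0 x0 (coneUInf μs) ≤ gInt t0 x0 ν := pVal_le b t0 x0 ⟨hνmem, hνfeas⟩
  refine ⟨fun k => φ k + 1, ν, fun i j hij => Nat.add_lt_add_right (hφ hij) 1,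
    fun k => Nat.le_add_left 1 _, hνmem, hνfeas, hvague, hpν, hνg, hlimp, ?_⟩
  intro ξ μI hξ hmass hv hfeas hopt hlim
  have hc := part_c b t0 x0 ht0 μs hfin (Set.Ici (2 * b 0)) hsupp hpos ξ μI hξ hmass hv
    hfeas.2 hlim
  rw [hopt] at hc
  exact ⟨le_antisymm (hνg.trans hc) hpν, le_antisymm (hpν.trans hνg) hc⟩
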